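/- Let G be a finitely generated group admitting a minimal, non-elliptic action without inversions on a simplicial tree T. If all edge stabilisers are finitely generated and undistorted in G, then all vertex stabilisers are finitely generated and undistorted in G. -/

import Mathlib

/-!
Why vertex groups are undistorted. Fix a vertex `x` with stabiliser `H`, and for every letter
`s` a walk in the tree from `x` to `s • x`. A geodesic word for `h ∈ H` then traces a walk from
`x` to `h • x = x` whose length is linear in the length of `h`, and each of its vertices is `γ • u`
with `γ` a prefix of the word and `u` in a fixed finite set `U`. Whenever this walk visits `x`,
the prefix `γ` is at bounded distance from an element of `H`. Between two consecutive visits the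
walk stays in one branch of the tree at `x` (`InBranch`), so it leaves and returns through the
same edge (`InBranch.eq_of_adj`). Up to translation by `H` there are finitely many such edges,
so the two elements of `H` differ by an element of one of finitely many edge groups times one
of finitely many elements of `H` (`exists_trackData`). Undistortion of the edge groups writes this
difference as a product of elements of `H` of bounded length, linearly many in the duration of
the excursion. Adding over all excursions (`Tracked.step`, `Tracked.word`), `h` is a product of
linearly many elements of `H` of bounded length, which says that `H` is generated by a finite
ball and undistorted (`fgUndistorted_of_chainCost`).
-/

open Set Filter Topology
open scoped ENNReal

namespace MorseGoG

/-! ## Metric notions relative to an explicit distance function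

Throughout, distances are given by an explicit function `d : X → X → ℝ`, so that the same
notions apply to metric spaces (`d = dist`), to groups with word metrics, and to subgroups
with their own word metrics. -/

variable {X : Type*}

/-- `γ` is a `C`-quasi-geodesic on the parameter set `I ⊆ ℝ` with respect to `d`:
`C ≥ 1` and `|s−t|/C − C ≤ d (γ s) (γ t) ≤ C|s−t| + C` for all `s, t ∈ I`. -/
def IsQG (d : X → X → ℝ) (C : ℝ) (I : Set ℝ) (γ : ℝ → X) : Prop :=
  1 ≤ C ∧ ∀ s ∈ I, ∀ t ∈ I,
    |s - t| / C - C ≤ d (γ s) (γ t) ∧ d (γ s) (γ t) ≤ C * |s - t| + C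

/-- `x` lies in the (closed) `r`-neighbourhood of `A` with respect to `d`. -/
def InNbhd (d : X → X → ℝ) (A : Set X) (r : ℝ) (x : X) : Prop :=
  ∃ a ∈ A, d x a ≤ r

/-- The set `A` (e.g. the image of a quasi-geodesic) is `N`-Morse with respect to `d`:
every `C`-quasi-geodesic segment with endpoints on `A` is contained in the
`N C`-neighbourhood of `A`. -/
def MorseSet (d : X → X → ℝ) (N : ℝ → ℝ) (A : Set X) : Prop :=
  ∀ C : ℝ, 1 ≤ C → ∀ a b : ℝ, a ≤ b → ∀ α : ℝ → X,
    IsQG d C (Set.Icc a b) α → α a ∈ A → α b ∈ A →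
    ∀ t ∈ Set.Icc a b, InNbhd d A (N C) (α t)

/-- `A` is Morse: it is `N`-Morse for some Morse gauge `N`. -/
def IsMorse (d : X → X → ℝ) (A : Set X) : Prop := ∃ N : ℝ → ℝ, MorseSet d N A

/-- A discrete geodesic ray: the sequence of vertices of a geodesic ray in a graph. -/
def IsGeodSeq (d : X → X → ℝ) (γ : ℕ → X) : Prop :=
  ∀ m n : ℕ, d (γ m) (γ n) = |(m : ℝ) - (n : ℝ)|

/-- A discrete geodesic segment of length `n`. -/
def IsGeodSeg (d : X → X → ℝ) (n : ℕ) (γ : ℕ → X) : Prop :=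
  ∀ i ≤ n, ∀ j ≤ n, d (γ i) (γ j) = |(i : ℝ) - (j : ℝ)|

/-- A discrete `C`-quasi-geodesic ray. -/
def IsQGSeq (d : X → X → ℝ) (C : ℝ) (γ : ℕ → X) : Prop :=
  1 ≤ C ∧ ∀ m n : ℕ,
    |(m : ℝ) - n| / C - C ≤ d (γ m) (γ n) ∧ d (γ m) (γ n) ≤ C * |(m : ℝ) - n| + C

/-- Two sets are at finite Hausdorff distance with respect to `d`. -/
def BddHD (d : X → X → ℝ) (A B : Set X) : Prop :=
  ∃ r : ℝ, (∀ a ∈ A, InNbhd d B r a) ∧ (∀ b ∈ B, InNbhd d A r b)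

/-- A discrete edge path with `n` steps: consecutive points are at distance at most `1`
(i.e. equal or joined by an edge, in a graph whose vertex set carries the metric `d`). -/
def IsEdgePath (d : X → X → ℝ) (n : ℕ) (c : ℕ → X) : Prop :=
  ∀ i < n, d (c i) (c (i + 1)) ≤ 1

/-- Combinatorial divergence of a discrete ray `γ` in a graph with vertex distance `d`:
the infimum, over `s ≥ r` and over edge paths joining `γ (s - r)` to `γ (s + r)` and
avoiding the ball of radius `ε·r` around `γ s`, of the length of the path. -/
noncomputable def gdivergence (d : X → X → ℝ) (γ : ℕ → X) (r : ℕ) (ε : ℝ) : ℝ≥0∞ :=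
  ⨅ (s : ℕ) (_ : r ≤ s) (n : ℕ) (c : ℕ → X) (_ : IsEdgePath d n c)
    (_ : c 0 = γ (s - r)) (_ : c n = γ (s + r))
    (_ : ∀ i ≤ n, ε * r < d (c i) (γ s)), (n : ℝ≥0∞)

/-! ## Geodesic metric spaces, geodesic rays, divergence -/

variable {Y : Type*} [MetricSpace Y]

/-- A geodesic metric space: any two points are joined by an isometrically parametrised path. -/
def IsGeodesicSpace (Y : Type*) [MetricSpace Y] : Prop :=
  ∀ x y : Y, ∃ γ : ℝ → Y, γ 0 = x ∧ γ (dist x y) = y ∧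
    ∀ s ∈ Set.Icc 0 (dist x y), ∀ t ∈ Set.Icc 0 (dist x y), dist (γ s) (γ t) = |s - t|

/-- A geodesic ray (defined on `[0,∞)` and extended constantly to negative times). -/
def IsGeodRay (γ : ℝ → Y) : Prop :=
  (∀ s t : ℝ, 0 ≤ s → 0 ≤ t → dist (γ s) (γ t) = |s - t|) ∧ ∀ t : ℝ, γ t = γ (max t 0)

theorem IsGeodRay.lipschitz {γ : ℝ → Y} (h : IsGeodRay γ) : LipschitzWith 1 γ := by
  apply LipschitzWith.of_dist_le_mul
  intro s t
  rw [h.2 s, h.2 t, h.1 _ _ (le_max_right s 0) (le_max_right t 0)]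
  rw [NNReal.coe_one, one_mul, Real.dist_eq]
  exact abs_max_sub_max_le_abs s t 0

/-- Divergence function `δ_γ(r, ε)` of a quasi-geodesic ray `γ` in a metric space:
the infimum of lengths (total variations) of paths connecting `γ (s - r)` to `γ (s + r)`
outside the closed ball `B(γ s, εr)`, over all `s ≥ r`. -/
noncomputable def divergence (γ : ℝ → Y) (r ε : ℝ) : ℝ≥0∞ :=
  ⨅ (s : ℝ) (_ : r ≤ s) (c : ℝ → Y) (_ : ContinuousOn c (Set.Icc 0 1))
    (_ : c 0 = γ (s - r)) (_ : c 1 = γ (s + r))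
    (_ : ∀ t ∈ Set.Icc (0 : ℝ) 1, ε * r < dist (c t) (γ s)),
    eVariationOn c (Set.Icc 0 1)

/-- Quasi-isometric embedding between sets carrying explicit distance functions. -/
def IsQIEmb {Z W : Type*} (dZ : Z → Z → ℝ) (dW : W → W → ℝ) (f : Z → W) : Prop :=
  ∃ C : ℝ, 1 ≤ C ∧ ∀ z z' : Z,
    dZ z z' / C - C ≤ dW (f z) (f z') ∧ dW (f z) (f z') ≤ C * dZ z z' + C

/-! ## The Morse boundary of a proper geodesic metric space -/

/-- A Morse geodesic ray based at `p` in the metric space `Y`. -/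
structure MRay (Y : Type*) [MetricSpace Y] (p : Y) where
  ray : ℝ → Y
  base : ray 0 = p
  geod : IsGeodRay ray
  morse : IsMorse dist (Set.range ray)

/-- Two rays are identified when they are at finite Hausdorff distance. -/
def mrayRel (p : Y) (x y : MRay Y p) : Prop :=
  BddHD dist (Set.range x.ray) (Set.range y.ray)

/-- The Morse boundary of a metric space, as a set: Morse geodesic rays based at `p`,
modulo finite Hausdorff distance. -/
def MorseBoundarySp (Y : Type*) [MetricSpace Y] (p : Y) : Type _ := Quot (mrayRel p)

/-- The `N`-Morse stratum: `N`-Morse geodesic rays based at `p`. -/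
def NRaysSp (Y : Type*) [MetricSpace Y] (p : Y) (N : ℝ → ℝ) : Type _ :=
  {γ : MRay Y p // MorseSet dist N (Set.range γ.ray)}

/-- Each stratum of rays carries the compact-open topology (as a set of continuous maps). -/
noncomputable instance NRaysSp.instTop (p : Y) (N : ℝ → ℝ) : TopologicalSpace (NRaysSp Y p N) :=
  TopologicalSpace.induced
    (fun γ => (⟨γ.1.ray, γ.1.geod.lipschitz.continuous⟩ : C(ℝ, Y))) inferInstance

/-- The Morse boundary carries the direct limit topology over all Morse gauges:
a set is open iff its intersection with each stratum `∂_M^N Y_p` is open there. -/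
noncomputable instance MorseBoundarySp.instTop (p : Y) :
    TopologicalSpace (MorseBoundarySp Y p) :=
  ⨆ N : ℝ → ℝ,
    TopologicalSpace.coinduced (fun γ : NRaysSp Y p N => Quot.mk (mrayRel p) γ.1) inferInstance

/-- The relative Morse boundary `(∂_M Y, f)` of a quasi-isometric embedding `f : Y → X`:
classes of Morse rays of `Y` whose image under `f` is Morse in `X`.  It is a subset of
`∂_M Y` (and carries the subspace topology). -/
def relBoundarySp {Y X : Type*} [MetricSpace Y] [MetricSpace X] (p : Y) (f : Y → X) :
    Set (MorseBoundarySp Y p) :=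
  {ξ | ∃ γ : MRay Y p, Quot.mk (mrayRel p) γ = ξ ∧ IsMorse dist (f '' Set.range γ.ray)}

/-! ## Word metrics and Morse boundaries of finitely generated groups -/

variable {G : Type*} [Group G]

/-- Word length of `g` with respect to the (symmetrised) alphabet `S`. -/
noncomputable def wordLength (S : Set G) (g : G) : ℕ :=
  sInf {n : ℕ | ∃ l : List G, l.length = n ∧ (∀ x ∈ l, x ∈ S ∨ x⁻¹ ∈ S) ∧ l.prod = g}

/-- Word metric on `G` with respect to `S`; this is the distance between vertices in the
Cayley graph `Cay(G, S)`. -/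
noncomputable def wdist (S : Set G) (g h : G) : ℝ := wordLength S (g⁻¹ * h)

/-- A Morse geodesic ray in the Cayley graph of `(G, S)`, based at the identity,
recorded by its sequence of vertices. -/
structure GRay (G : Type*) [Group G] (S : Set G) where
  seq : ℕ → G
  base : seq 0 = 1
  geod : IsGeodSeq (wdist S) seq
  morse : IsMorse (wdist S) (Set.range seq)

/-- Identification of rays at finite Hausdorff distance. -/
def grayRel (S : Set G) (x y : GRay G S) : Prop :=
  BddHD (wdist S) (Set.range x.seq) (Set.range y.seq)

/-- The Morse boundary `∂_M G` of the group `G` with finite generating set `S`. -/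
def MorseBoundary (G : Type*) [Group G] (S : Set G) : Type _ := Quot (grayRel (G := G) S)

/-- The stratum of `N`-Morse rays. -/
def NGRays (G : Type*) [Group G] (S : Set G) (N : ℝ → ℝ) : Type _ :=
  {γ : GRay G S // MorseSet (wdist S) N (Set.range γ.seq)}

/-- The compact-open topology on a stratum: for rays in a graph (vertex sequences) this is
the topology of pointwise convergence of the vertex sequences, `G` being discrete. -/
noncomputable instance NGRays.instTop (S : Set G) (N : ℝ → ℝ) :
    TopologicalSpace (NGRays G S N) :=
  TopologicalSpace.induced (fun γ => γ.1.seq)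
    (@Pi.topologicalSpace ℕ (fun _ => G) (fun _ => ⊥))

/-- The direct limit topology on the Morse boundary of a group. -/
noncomputable instance MorseBoundary.instTop (S : Set G) :
    TopologicalSpace (MorseBoundary G S) :=
  ⨆ N : ℝ → ℝ,
    TopologicalSpace.coinduced (fun γ : NGRays G S N => Quot.mk (grayRel S) γ.1) inferInstance

/-! ## Subgroups: undistortion, relative Morse boundaries -/

/-- `H` is finitely generated and undistorted in `(G, S)`: it has a finite generating set
whose word metric is bi-Lipschitz equivalent (suitably, quasi-isometric) to the metric
induced from `G`. -/
def FGUndistorted (S : Set G) (H : Subgroup G) : Prop :=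
  ∃ T : Finset H, Subgroup.closure (T : Set H) = ⊤ ∧
    ∃ C : ℝ, 1 ≤ C ∧ ∀ h h' : H,
      wdist (T : Set H) h h' ≤ C * wdist S (h : G) (h' : G) + C ∧
      wdist S (h : G) (h' : G) ≤ C * wdist (T : Set H) h h' + C

/-- The relative Morse boundary of `H` in `G` is empty, `(∂_M H, G) = ∅`:
no Morse geodesic ray of `H` (w.r.t. any finite generating set of `H`) remains Morse in `G`. -/
def RelMorseEmpty (S : Set G) (H : Subgroup G) : Prop :=
  ∀ T : Finset H, Subgroup.closure (T : Set H) = ⊤ →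
    ∀ γ : ℕ → H, IsGeodSeq (wdist (T : Set H)) γ →
      IsMorse (wdist (T : Set H)) (Set.range γ) →
      ¬ IsMorse (wdist S) (Set.range fun n => (γ n : G))

/-- The image of the natural injection `(∂_M H, G) ↪ ∂_M G`: those classes in `∂_M G`
having a representative ray staying at bounded distance from `H`. -/
def relBdryImage (S : Set G) (H : Subgroup G) : Set (MorseBoundary G S) :=
  {ξ | ∃ γ : GRay G S, Quot.mk (grayRel S) γ = ξ ∧
        ∃ r : ℝ, ∀ n : ℕ, ∃ h ∈ H, wdist S (γ.seq n) h ≤ r}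

/-- The relative Morse boundary `(∂_M H, G)` as a subset of `∂_M H` (where `∂_M H` is
formed w.r.t. a generating set `T` of `H`): classes of rays that remain Morse in `G`. -/
def relBdryIn (S : Set G) (H : Subgroup G) (T : Set H) : Set (MorseBoundary H T) :=
  {ξ | ∃ γ : GRay H T, Quot.mk (grayRel T) γ = ξ ∧
        IsMorse (wdist S) (Set.range fun n => (γ.seq n : G))}

/-- Specification of the natural map `∂_M H → ∂_M G` (or of its restriction to the relative
boundary): each class is sent to the class of a ray of `G` at finite Hausdorff distance
from the image of (a representative of) the given class. -/
def InclSpec (S : Set G) (H : Subgroup G) (TH : Set H)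
    (F : MorseBoundary H TH → MorseBoundary G S) : Prop :=
  ∀ γ : GRay H TH, ∀ β : GRay G S,
    Quot.mk (grayRel S) β = F (Quot.mk (grayRel TH) γ) →
    BddHD (wdist S) (Set.range fun n => ((γ.seq n : G))) (Set.range β.seq)

/-! ## Asymptotic cones and relatively wide subgroups -/

/-- Admissible sequences for an asymptotic cone: sequences at bounded rescaled distance
from the basepoints `o`. -/
def conePts (ω : Ultrafilter ℕ) (d : X → X → ℝ) (o : ℕ → X) (s : ℕ → ℝ) : Set (ℕ → X) :=
  {x | ∃ B : ℝ, ∀ᶠ n in (ω : Filter ℕ), d (o n) (x n) ≤ B * s n}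

/-- The pseudo-distance of the asymptotic cone: ultralimit of the rescaled distances. -/
noncomputable def coneDist (ω : Ultrafilter ℕ) (d : X → X → ℝ) (s : ℕ → ℝ)
    (x y : ℕ → X) : ℝ :=
  limUnder (ω : Filter ℕ) (fun n => d (x n) (y n) / s n)

/-- The topology of the asymptotic cone, as a topology on representative sequences:
generated by the open balls of the cone pseudo-distance. -/
noncomputable def coneTop (ω : Ultrafilter ℕ) (d : X → X → ℝ) (o : ℕ → X) (s : ℕ → ℝ) :
    TopologicalSpace (ℕ → X) :=
  TopologicalSpace.generateFrom
    {U | ∃ c ∈ conePts ω d o s, ∃ ε : ℝ, 0 < ε ∧ U = {x | coneDist ω d s c x < ε}}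

/-- `z` is a cut point of the asymptotic cone separating the points `x` and `y`:
`x, y` differ from `z` and do not lie in a common connected subset of the complement
of (the point represented by) `z`. -/
def ConeSeparates (ω : Ultrafilter ℕ) (d : X → X → ℝ) (o : ℕ → X) (s : ℕ → ℝ)
    (x y z : ℕ → X) : Prop :=
  coneDist ω d s x z ≠ 0 ∧ coneDist ω d s y z ≠ 0 ∧
  ¬ ∃ A : Set (ℕ → X),
      A ⊆ {w ∈ conePts ω d o s | coneDist ω d s w z ≠ 0} ∧ x ∈ A ∧ y ∈ A ∧
      @IsPreconnected (ℕ → X) (coneTop ω d o s) A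

/-- `H` is relatively wide in `(G, S)`: in every asymptotic cone of `G` (over a
non-principal ultrafilter, arbitrary basepoints and scaling factors tending to infinity),
no two limit points of `H` are separated by a cut point. -/
def RelativelyWide (S : Set G) (H : Subgroup G) : Prop :=
  ∀ ω : Ultrafilter ℕ, (ω : Filter ℕ) ≤ Filter.cofinite →
  ∀ (o : ℕ → G) (s : ℕ → ℝ), (∀ n, 0 < s n) → Tendsto s atTop atTop →
  ∀ x y z : ℕ → G, (∀ n, x n ∈ H) → (∀ n, y n ∈ H) →
    x ∈ conePts ω (wdist S) o s → y ∈ conePts ω (wdist S) o s →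
    z ∈ conePts ω (wdist S) o s →
    ¬ ConeSeparates ω (wdist S) o s x y z

/-- The subgroup `H ≤ V` is relatively wide in `V` (for any, equivalently some, finite
generating set of `V`). -/
def RelWideIn (V H : Subgroup G) : Prop :=
  ∀ SV : Finset V, Subgroup.closure (SV : Set V) = ⊤ →
    RelativelyWide (SV : Set V) (H.subgroupOf V)

/-! ## Actions on simplicial trees -/

variable {VT : Type*}

/-- `G` splits as a graph of groups: it acts on the simplicial tree `T`
(preserving adjacency), minimally, non-elliptically and without inversions. -/
def ActsOnTree (G : Type*) [Group G] {VT : Type*} (T : SimpleGraph VT) [MulAction G VT] :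
    Prop :=
  T.IsTree ∧
  (∀ (g : G) (a b : VT), T.Adj a b → T.Adj (g • a) (g • b)) ∧
  (∀ (g : G) (a b : VT), T.Adj a b → ¬(g • a = b ∧ g • b = a)) ∧
  (¬ ∃ v : VT, ∀ g : G, g • v = v) ∧
  (∀ W : Set VT, W.Nonempty → (∀ (g : G), ∀ v ∈ W, g • v ∈ W) →
    (∀ a ∈ W, ∀ b ∈ W, ∀ c : VT, T.dist a c + T.dist c b = T.dist a b → c ∈ W) →
    W = Set.univ)

/-- The stabiliser of the edge `{a, b}` (pointwise; for actions without inversions this is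
the full edge stabiliser). -/
def edgeStab (G : Type*) [Group G] {VT : Type*} [MulAction G VT] (a b : VT) : Subgroup G :=
  MulAction.stabilizer G a ⊓ MulAction.stabilizer G b

/-- The halfspace determined by the edge `{a, b}` containing `b`: one of the two connected
components of the complement of the open edge. -/
def halfspace {VT : Type*} (T : SimpleGraph VT) (a b : VT) : Set VT :=
  {v | T.dist v b < T.dist v a}

end MorseGoG

namespace MorseGoG

variable {G : Type*} [Group G] {VT : Type*}

/-- A choice of "edge subgraphs" `Γ(𝔢) ⊆ Γ` of the Cayley graph `Γ = Cay(G, S)`, one for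
each (unoriented) edge of the tree `T`, recorded by its vertex set `A a b ⊆ G`,
satisfying the properties of Lemma 3.2 (`AIS lem`).  Here `p` is the fixed base vertex of
`T` and `f_p(g) = g • p` is the orbit map. -/
structure EdgeSubgraphs (G : Type*) [Group G] (S : Set G) {VT : Type*} (T : SimpleGraph VT)
    [MulAction G VT] (p : VT) where
  /-- the vertex set of `Γ(𝔢)` for the edge `𝔢 = {a, b}` -/
  A : VT → VT → Set G
  /-- `Γ(𝔢)` only depends on the unoriented edge -/
  symm : ∀ a b : VT, A a b = A b a
  /-- (1) `Γ(𝔢)` is connected -/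
  conn : ∀ a b : VT, T.Adj a b → ∀ x ∈ A a b, ∀ y ∈ A a b,
    ∃ (n : ℕ) (c : ℕ → G), IsEdgePath (wdist S) n c ∧ c 0 = x ∧ c n = y ∧
      ∀ i ≤ n, c i ∈ A a b
  /-- (1) `Γ(𝔢)` is `G_𝔢`-invariant -/
  inva : ∀ a b : VT, T.Adj a b → ∀ g ∈ edgeStab G a b, ∀ x ∈ A a b, g * x ∈ A a b
  /-- (1) `Γ(𝔢)` is `G_𝔢`-cocompact -/
  cocpt : ∀ a b : VT, T.Adj a b →
    ∃ F : Finset G, ∀ x ∈ A a b, ∃ g ∈ edgeStab G a b, ∃ f ∈ F, x = g * f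
  /-- (2) equivariance: `Γ(g𝔢) = gΓ(𝔢)` -/
  equivariant : ∀ (g : G) (a b : VT), A (g • a) (g • b) = (fun x => g * x) '' A a b
  /-- (3) `Γ(𝔢)` contains every edge of `Γ` with one endpoint in `f_p⁻¹(𝔥)` and the other
  in `f_p⁻¹(𝔥*)` -/
  crossing : ∀ a b : VT, T.Adj a b → ∀ x y : G, wdist S x y = 1 →
    x • p ∈ halfspace T a b → y • p ∈ halfspace T b a → x ∈ A a b ∧ y ∈ A a b
  /-- (4) `N(f_p⁻¹(𝔥), r) ∩ N(f_p⁻¹(𝔥*), r) ⊆ N(Γ(𝔢), r)` -/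
  nbhd : ∀ a b : VT, T.Adj a b → ∀ r : ℝ, 0 ≤ r → ∀ x : G,
    (∃ y : G, y • p ∈ halfspace T a b ∧ wdist S x y ≤ r) →
    (∃ y : G, y • p ∈ halfspace T b a ∧ wdist S x y ≤ r) →
    ∃ z ∈ A a b, wdist S x z ≤ r
  /-- (5) each edge of `Γ` lies in `Γ(𝔢)` for only finitely many edges `𝔢` of `T` -/
  finmany : ∀ x y : G, wdist S x y = 1 →
    {e : VT × VT | T.Adj e.1 e.2 ∧ x ∈ A e.1 e.2 ∧ y ∈ A e.1 e.2}.Finite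

/-- The vertex set of `Γ(𝔥)` for the halfspace `𝔥` of the edge `{a,b}` containing `b`:
`f_p⁻¹(𝔥) ∖ Γ(𝔢)`. -/
def hsVerts (T : SimpleGraph VT) [MulAction G VT] (p : VT)
    (A : VT → VT → Set G) (a b : VT) : Set G :=
  {g : G | g • p ∈ halfspace T a b ∧ g ∉ A a b}

/-- `M(𝔥) ⊆ ∂_M G`: classes of rays eventually contained in `Γ(𝔥)`, for the halfspace `𝔥`
of the edge `{a,b}` containing `b`. -/
def Mset (S : Set G) (T : SimpleGraph VT) [MulAction G VT] (p : VT)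
    (A : VT → VT → Set G) (a b : VT) : Set (MorseBoundary G S) :=
  {ξ | ∃ γ : GRay G S, Quot.mk (grayRel S) γ = ξ ∧
        ∃ n₀ : ℕ, ∀ n ≥ n₀, γ.seq n ∈ hsVerts T p A a b}

end MorseGoG

namespace MorseGoG

/-! ### Word length -/

section WordLength

variable {G : Type*} [Group G] {S : Set G}

theorem wordLength_le_of_list (l : List G) (h : ∀ x ∈ l, x ∈ S ∨ x⁻¹ ∈ S) :
    wordLength S l.prod ≤ l.length :=
  Nat.sInf_le ⟨l, rfl, h, rfl⟩

theorem exists_list_wordLength (hS : Subgroup.closure S = ⊤) (g : G) :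
    ∃ l : List G, l.length = wordLength S g ∧ (∀ x ∈ l, x ∈ S ∨ x⁻¹ ∈ S) ∧ l.prod = g := by
  have hg : g ∈ (Subgroup.closure S).toSubmonoid := by rw [hS]; trivial
  rw [Subgroup.closure_toSubmonoid] at hg
  obtain ⟨l, hl, hp⟩ := Submonoid.exists_list_of_mem_closure hg
  exact Nat.sInf_mem (s := {n : ℕ | ∃ l : List G, l.length = n ∧
    (∀ x ∈ l, x ∈ S ∨ x⁻¹ ∈ S) ∧ l.prod = g}) ⟨l.length, l, rfl, hl, hp⟩

theorem wordLength_mul_le (hS : Subgroup.closure S = ⊤) (g h : G) :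
    wordLength S (g * h) ≤ wordLength S g + wordLength S h := by
  obtain ⟨l, hl, hlS, rfl⟩ := exists_list_wordLength hS g
  obtain ⟨m, hm, hmS, rfl⟩ := exists_list_wordLength hS h
  rw [← hl, ← hm, ← List.prod_append, ← List.length_append]
  refine wordLength_le_of_list _ fun x hx => ?_
  rcases List.mem_append.1 hx with hx | hx
  exacts [hlS x hx, hmS x hx]

theorem wordLength_inv_le (hS : Subgroup.closure S = ⊤) (g : G) :
    wordLength S g⁻¹ ≤ wordLength S g := by
  obtain ⟨l, hl, hlS, rfl⟩ := exists_list_wordLength hS g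
  rw [← hl, List.prod_inv_reverse]
  refine (wordLength_le_of_list _ fun x hx => ?_).trans (by simp)
  simp only [List.mem_reverse, List.mem_map] at hx
  obtain ⟨y, hy, rfl⟩ := hx
  rw [inv_inv]
  exact (hlS y hy).symm

theorem wordLength_le_one {s : G} (hs : s ∈ S ∨ s⁻¹ ∈ S) : wordLength S s ≤ 1 := by
  have := wordLength_le_of_list (S := S) [s] (by simpa using hs)
  simpa using this

theorem finite_ball (hfin : S.Finite) (hS : Subgroup.closure S = ⊤) (R : ℕ) :
    {g : G | wordLength S g ≤ R}.Finite := by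
  have hA : (S ∪ S⁻¹).Finite := hfin.union hfin.inv
  have : Finite ↥(S ∪ S⁻¹) := hA
  refine ((List.finite_length_le ↥(S ∪ S⁻¹) R).image
    (fun l => (l.map Subtype.val).prod)).subset ?_
  intro g hg
  obtain ⟨l, hl, hlS, rfl⟩ := exists_list_wordLength hS g
  refine ⟨l.pmap Subtype.mk (fun y hy => by simpa using hlS y hy), ?_, ?_⟩
  · simpa [hl] using hg
  · simp [List.map_pmap]

end WordLength

/-! ### Chains inside a subgroup -/

section Cost

variable {G : Type*} [Group G] {S : Set G} {H : Subgroup G}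

/-- `g` is a product of at most `N` elements of `H`, each of word length at most `R` in the
ambient group. -/
def ChainCost (S : Set G) (H : Subgroup G) (R N : ℕ) (g : G) : Prop :=
  ∃ l : List G, l.length ≤ N ∧ (∀ y ∈ l, y ∈ H ∧ wordLength S y ≤ R) ∧ l.prod = g

theorem ChainCost.mono {R R' N N' : ℕ} {K : Subgroup G} {g : G} (h : ChainCost S H R N g)
    (hR : R ≤ R') (hN : N ≤ N') (hK : H ≤ K) : ChainCost S K R' N' g := by
  obtain ⟨l, h1, h2, h3⟩ := h
  exact ⟨l, h1.trans hN, fun y hy => ⟨hK (h2 y hy).1, (h2 y hy).2.trans hR⟩, h3⟩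

theorem ChainCost.one (R N : ℕ) : ChainCost S H R N 1 := ⟨[], by simp, by simp, rfl⟩

theorem ChainCost.single {R : ℕ} {g : G} (hg : g ∈ H) (hR : wordLength S g ≤ R) :
    ChainCost S H R 1 g := ⟨[g], by simp, by simpa using ⟨hg, hR⟩, by simp⟩

theorem ChainCost.mul {R N N' : ℕ} {g g' : G} (h : ChainCost S H R N g)
    (h' : ChainCost S H R N' g') : ChainCost S H R (N + N') (g * g') := by
  obtain ⟨l, h1, h2, rfl⟩ := h
  obtain ⟨m, k1, k2, rfl⟩ := h'
  refine ⟨l ++ m, by simp; omega, fun y hy => ?_, by simp⟩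
  rcases List.mem_append.1 hy with hy | hy
  exacts [h2 y hy, k2 y hy]

theorem ChainCost.mem {R N : ℕ} {g : G} (h : ChainCost S H R N g) : g ∈ H := by
  obtain ⟨l, -, h2, rfl⟩ := h
  exact H.list_prod_mem fun y hy => (h2 y hy).1

/-- An undistorted subgroup is coarsely connected with linear control: the generators of the
subgroup have bounded length in the ambient group. -/
theorem FGUndistorted.exists_chainCost (h : FGUndistorted S H) :
    ∃ R C : ℕ, ∀ g ∈ H, ChainCost S H R (C * wordLength S g + C) g := by
  obtain ⟨T, hT, C, hC, hTC⟩ := h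
  refine ⟨T.sup fun t => max (wordLength S (t : G)) (wordLength S ((t : G)⁻¹)), ⌈C⌉₊,
    fun g hg => ?_⟩
  obtain ⟨l, hl, hlT, hp⟩ := exists_list_wordLength hT ⟨g, hg⟩
  have h1 := (hTC 1 ⟨g, hg⟩).1
  simp only [wdist, inv_one, one_mul, OneMemClass.coe_one] at h1
  refine ⟨l.map Subtype.val, ?_, ?_, ?_⟩
  · rw [List.length_map, hl]
    have h2 : C ≤ (⌈C⌉₊ : ℝ) := Nat.le_ceil C
    have h3 : (0 : ℝ) ≤ wordLength S g := Nat.cast_nonneg _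
    have : (wordLength (T : Set H) ⟨g, hg⟩ : ℝ) ≤ ⌈C⌉₊ * wordLength S g + ⌈C⌉₊ := by
      nlinarith
    exact_mod_cast this
  · intro y hy
    obtain ⟨z, hz, rfl⟩ := List.mem_map.1 hy
    refine ⟨z.2, ?_⟩
    rcases hlT z hz with h | h
    · exact (le_max_left _ _).trans (Finset.le_sup
        (f := fun t : H => max (wordLength S (t : G)) (wordLength S ((t : G)⁻¹))) h)
    · have := (le_max_right _ _).trans (Finset.le_sup
        (f := fun t : H => max (wordLength S (t : G)) (wordLength S ((t : G)⁻¹))) h)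
      simpa using this
  · have := congrArg Subtype.val hp
    simpa using this

/-- Converse of `FGUndistorted.exists_chainCost`: the ball of radius `R` in `H` is a finite
generating set realising undistortion. -/
theorem fgUndistorted_of_chainCost (hfin : S.Finite) (hS : Subgroup.closure S = ⊤) {R C : ℕ}
    (h : ∀ g ∈ H, ChainCost S H R (C * wordLength S g + C) g) : FGUndistorted S H := by
  have hB : {y : H | wordLength S (y : G) ≤ R}.Finite :=
    (finite_ball hfin hS R).preimage Subtype.val_injective.injOn
  have key : ∀ g : H, ∃ l : List H, l.length ≤ C * wordLength S (g : G) + C ∧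
      (∀ y ∈ l, y ∈ {y : H | wordLength S (y : G) ≤ R}) ∧ l.prod = g := by
    intro g
    obtain ⟨l, h1, h2, h3⟩ := h g g.2
    refine ⟨l.pmap Subtype.mk (fun y hy => (h2 y hy).1), by simpa using h1, ?_, ?_⟩
    · intro y hy
      obtain ⟨a, ha, rfl⟩ := List.mem_pmap.1 hy
      exact (h2 a ha).2
    · apply Subtype.ext
      rw [← h3, ← Subgroup.coe_subtype, map_list_prod, List.map_pmap]
      simp
  have hgen : Subgroup.closure ((hB.toFinset : Finset H) : Set H) = ⊤ := by
    rw [eq_top_iff]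
    intro g _
    obtain ⟨l, -, h2, rfl⟩ := key g
    exact Subgroup.list_prod_mem _ fun y hy => Subgroup.subset_closure (by simpa using h2 y hy)
  refine ⟨hB.toFinset, hgen, max 1 (max C R), le_max_left _ _, fun a b => ?_⟩
  have e : (a : G)⁻¹ * b = ((a⁻¹ * b : H) : G) := by simp
  simp only [wdist, e]
  generalize a⁻¹ * b = g
  have hC : (C : ℝ) ≤ max 1 (max (C : ℝ) R) := (le_max_left _ _).trans (le_max_right _ _)
  have hR : (R : ℝ) ≤ max 1 (max (C : ℝ) R) := (le_max_right _ _).trans (le_max_right _ _)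
  have h1 : (1 : ℝ) ≤ max 1 (max (C : ℝ) R) := le_max_left _ _
  constructor
  · obtain ⟨l, k1, k2, rfl⟩ := key g
    have hl : wordLength ((hB.toFinset : Finset H) : Set H) l.prod ≤
        C * wordLength S (l.prod : G) + C := (wordLength_le_of_list l fun y hy =>
          Or.inl (by simpa using k2 y hy)).trans k1
    have hl' : (wordLength ((hB.toFinset : Finset H) : Set H) l.prod : ℝ) ≤
        C * wordLength S ((l.prod : H) : G) + C := by exact_mod_cast hl
    refine hl'.trans ?_
    gcongr
  · obtain ⟨l, hl, hlT, rfl⟩ := exists_list_wordLength hgen g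
    have hb : ∀ l : List H, (∀ y ∈ l, y ∈ ((hB.toFinset : Finset H) : Set H) ∨
        y⁻¹ ∈ ((hB.toFinset : Finset H) : Set H)) →
        wordLength S (l.prod : G) ≤ R * l.length := by
      intro l hl
      induction l with
      | nil => simpa using wordLength_le_of_list (S := S) []
      | cons y l ih =>
        have ih' := ih fun z hz => hl z (List.mem_cons_of_mem _ hz)
        have hy : wordLength S (y : G) ≤ R := by
          rcases hl y List.mem_cons_self with hy | hy
          · simpa using hy
          · have h1 : wordLength S ((y : G)⁻¹) ≤ R := by simpa using hy
            have h2 := wordLength_inv_le hS ((y : G)⁻¹)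
            rw [inv_inv] at h2
            exact h2.trans h1
        have := wordLength_mul_le hS (y : G) (l.prod : G)
        simp only [List.prod_cons, Subgroup.coe_mul, List.length_cons, mul_add, mul_one]
        omega
    have h2 := hb l hlT
    rw [hl] at h2
    have h3 : (wordLength S (l.prod : G) : ℝ) ≤
        R * wordLength ((hB.toFinset : Finset H) : Set H) l.prod := by exact_mod_cast h2
    have h4 : (R : ℝ) * wordLength ((hB.toFinset : Finset H) : Set H) l.prod ≤
        max 1 (max (C : ℝ) R) * wordLength ((hB.toFinset : Finset H) : Set H) l.prod := by
      gcongr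
    linarith

end Cost

/-! ### Branches of a tree at a vertex -/

section Branch

variable {VT : Type*} {T : SimpleGraph VT} {x b v v' : VT}

/-- `v` lies in the branch at `x` through the neighbour `b`: it can be joined to `b`
without meeting `x`. -/
def InBranch (T : SimpleGraph VT) (x b v : VT) : Prop :=
  T.Adj x b ∧ ∃ w : T.Walk b v, x ∉ w.support

theorem InBranch.self (h : T.Adj x b) : InBranch T x b b :=
  ⟨h, .nil, by simpa using h.ne⟩

theorem InBranch.ne (h : InBranch T x b v) : v ≠ x := by
  obtain ⟨-, w, hw⟩ := h
  rintro rfl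
  exact hw w.end_mem_support

theorem InBranch.step (h : InBranch T x b v) (hv : T.Adj v v') (hx : v' ≠ x) :
    InBranch T x b v' := by
  obtain ⟨hb, w, hw⟩ := h
  refine ⟨hb, w.concat hv, ?_⟩
  simp [SimpleGraph.Walk.support_concat, hw, hx.symm]

theorem InBranch.eq_of_adj (hT : T.IsAcyclic) (h : InBranch T x b v) (hv : T.Adj v x) :
    v = b := by
  classical
  obtain ⟨hb, w, hw⟩ := h
  have hp : (SimpleGraph.Walk.cons hb w.bypass).IsPath := by
    rw [SimpleGraph.Walk.cons_isPath_iff]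
    exact ⟨w.bypass_isPath, fun hx => hw (w.support_bypass_subset_support hx)⟩
  have hq : (SimpleGraph.Walk.cons hv.symm .nil).IsPath := by
    simpa [SimpleGraph.Walk.cons_isPath_iff] using hv.ne.symm
  have := congrArg Subtype.val 
    ((hT.subsingleton_path x v).elim ⟨_, hp⟩ ⟨_, hq⟩)
  simp only [SimpleGraph.Walk.cons.injEq] at this
  exact this.1.symm

end Branch

/-! ### Following a word along the tree -/

section Tracking

variable {G VT : Type*} [Group G] [MulAction G VT]

/-- Choices made once and for all around the vertex `x`, with constants bounding them.
`U` is a finite set of vertices in which the words of `G` are tracked, `c` moves the vertices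
of `U` in the orbit of `x` to `x`. -/
structure TrackData (S : Set G) (T : SimpleGraph VT) (x : VT) where
  U : Set VT
  c : VT → G
  K : ℕ
  R : ℕ
  C : ℕ
  /-- `c u` moves `u` to `x` whenever this is possible -/
  c_smul : ∀ (g : G) (u : VT), g • u = x → c u • u = x
  c_le : ∀ u ∈ U, wordLength S (c u) ≤ K
  /-- elements of the stabiliser of `x` matching two translated edges cost linearly much -/
  cost : ∀ u₁ ∈ U, ∀ v₁ ∈ U, ∀ u₂ ∈ U, ∀ v₂ ∈ U, T.Adj x (c u₁ • v₁) →
    ∀ h ∈ MulAction.stabilizer G x, h • c u₂ • v₂ = c u₁ • v₁ →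
      ChainCost S (MulAction.stabilizer G x) R (C * wordLength S h + C) h
  le_R : 2 * K + 1 ≤ R

/-- The invariant carried along a word.  After `n` steps the position is the vertex `γ • u`.
If it is `x`, then the element `γ * (c u)⁻¹` of the stabiliser of `x` costs at most
`A * n`.  Otherwise the last visit to `x` happened at some time `j`, near the element `g` of the
stabiliser, and the position is in the branch entered at that time. -/
def Tracked {S : Set G} {T : SimpleGraph VT} {x : VT} (D : TrackData S T x) (A n : ℕ)
    (γ : G) (u : VT) : Prop :=
  (γ • u = x ∧ ChainCost S (MulAction.stabilizer G x) D.R (A * n) (γ * (D.c u)⁻¹)) ∨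
  ∃ j k : ℕ, j + k = n ∧ ∃ g ∈ MulAction.stabilizer G x, ∃ u₁ ∈ D.U, ∃ v₁ ∈ D.U,
    T.Adj x (D.c u₁ • v₁) ∧ InBranch T x (g • D.c u₁ • v₁) (γ • u) ∧
    ChainCost S (MulAction.stabilizer G x) D.R (A * j) g ∧ wordLength S (g⁻¹ * γ) ≤ k + D.K

variable {S : Set G} {T : SimpleGraph VT} {x : VT} {D : TrackData S T x} {A n : ℕ}
  {γ : G} {u : VT}

theorem TrackData.mul_inv_mem (D : TrackData S T x) (h : γ • u = x) :
    γ * (D.c u)⁻¹ ∈ MulAction.stabilizer G x := by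
  have h2 : (D.c u)⁻¹ • x = u := inv_smul_eq_iff.2 (D.c_smul γ u h).symm
  rw [MulAction.mem_stabilizer_iff, mul_smul, h2, h]

/-- One step along an edge of the tree.  The step back to `x` is where undistortion of the edge
groups is used: the excursion returns through the edge by which it left. -/
theorem Tracked.step (hS : Subgroup.closure S = ⊤) (hT : T.IsAcyclic)
    (hadj : ∀ (g : G) (a b : VT), T.Adj a b → T.Adj (g • a) (g • b))
    (hA : D.C * (2 * D.K) + D.C ≤ A) (hCA : D.C ≤ A) {u' : VT}
    (h : Tracked D A n γ u) (hu : u ∈ D.U) (hu' : u' ∈ D.U) (huu : T.Adj u u') :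
    Tracked D A (n + 1) γ u' := by
  have hγ := hadj γ _ _ huu
  rcases h with ⟨hx, hc⟩ | ⟨j, k, rfl, g, hg, u₁, hu₁, v₁, hv₁, hadj₁, hbr, hcost, hlen⟩
  · have e : (γ * (D.c u)⁻¹) • D.c u • u' = γ • u' := by rw [mul_smul, inv_smul_smul]
    refine Or.inr ⟨n, 1, rfl, γ * (D.c u)⁻¹, D.mul_inv_mem hx, u, hu, u', hu', ?_, ?_, hc, ?_⟩
    · have := hadj (D.c u) _ _ huu
      rwa [D.c_smul γ u hx] at this
    · rw [e]
      rw [hx] at hγ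
      exact InBranch.self hγ
    · have := D.c_le u hu
      simpa using this.trans (Nat.le_add_left _ 1)
  · by_cases hx : γ • u' = x
    · refine Or.inl ⟨hx, ?_⟩
      rw [hx] at hγ
      have hv := hbr.eq_of_adj hT hγ
      set g' := γ * (D.c u')⁻¹ with hg'
      have hg'x : g' ∈ MulAction.stabilizer G x := D.mul_inv_mem hx
      have hm : g⁻¹ * g' ∈ MulAction.stabilizer G x := mul_mem (inv_mem hg) hg'x
      have e : (g⁻¹ * g') • D.c u' • u = D.c u₁ • v₁ := by
        rw [mul_smul, hg', mul_smul, inv_smul_smul, hv, inv_smul_smul]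
      have hk := D.cost u₁ hu₁ v₁ hv₁ u' hu' u hu hadj₁ _ hm e
      have hl : wordLength S (g⁻¹ * g') ≤ k + 2 * D.K := by
        have h1 := wordLength_mul_le hS (g⁻¹ * γ) (D.c u')⁻¹
        have h2 := wordLength_inv_le hS (D.c u')
        have h3 := D.c_le u' hu'
        rw [hg', ← mul_assoc]
        omega
      have := hcost.mul hk
      rw [mul_inv_cancel_left] at this
      refine this.mono le_rfl ?_ le_rfl
      have h1 : D.C * wordLength S (g⁻¹ * g') ≤ D.C * (k + 2 * D.K) :=
        Nat.mul_le_mul_left _ hl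
      have h2 : D.C * k ≤ A * k := Nat.mul_le_mul_right _ hCA
      nlinarith
    · exact Or.inr ⟨j, k + 1, by omega, g, hg, u₁, hu₁, v₁, hv₁, hadj₁,
        hbr.step hγ hx, hcost, by omega⟩

/-- Passing to the next letter of the word: the position is unchanged, but is now written as
`(γ * s) • x` instead of `γ • (s • x)`. -/
theorem Tracked.next_letter (hS : Subgroup.closure S = ⊤) (hA : 1 ≤ A) {s : G}
    (hs : s ∈ S ∨ s⁻¹ ∈ S) (hsU : s • x ∈ D.U) (hxU : x ∈ D.U)
    (h : Tracked D A n γ (s • x)) : Tracked D A (n + 1) (γ * s) x := by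
  have hs1 := wordLength_le_one hs
  rcases h with ⟨hx, hc⟩ | ⟨j, k, rfl, g, hg, u₁, hu₁, v₁, hv₁, hadj₁, hbr, hcost, hlen⟩
  · have hx' : (γ * s) • x = x := by rw [mul_smul, hx]
    refine Or.inl ⟨hx', ?_⟩
    have hm : (γ * (D.c (s • x))⁻¹)⁻¹ * (γ * s * (D.c x)⁻¹) ∈ MulAction.stabilizer G x :=
      mul_mem (inv_mem (D.mul_inv_mem hx)) (D.mul_inv_mem hx')
    have e : (γ * (D.c (s • x))⁻¹)⁻¹ * (γ * s * (D.c x)⁻¹) = D.c (s • x) * s * (D.c x)⁻¹ := by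
      group
    have hl : wordLength S ((γ * (D.c (s • x))⁻¹)⁻¹ * (γ * s * (D.c x)⁻¹)) ≤ D.R := by
      rw [e]
      have h1 := wordLength_mul_le hS (D.c (s • x) * s) (D.c x)⁻¹
      have h2 := wordLength_mul_le hS (D.c (s • x)) s
      have h3 := wordLength_inv_le hS (D.c x)
      have h4 := D.c_le _ hsU
      have h5 := D.c_le _ hxU
      have h6 := D.le_R
      omega
    have := hc.mul (ChainCost.single hm hl)
    rw [mul_inv_cancel_left] at this
    exact this.mono le_rfl (by rw [mul_add]; omega) le_rfl
  · refine Or.inr ⟨j, k + 1, by omega, g, hg, u₁, hu₁, v₁, hv₁, hadj₁, ?_, hcost, ?_⟩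
    · rwa [mul_smul]
    · have := wordLength_mul_le hS (g⁻¹ * γ) s
      rw [← mul_assoc]
      omega

theorem Tracked.walk (hS : Subgroup.closure S = ⊤) (hT : T.IsAcyclic)
    (hadj : ∀ (g : G) (a b : VT), T.Adj a b → T.Adj (g • a) (g • b))
    (hA : D.C * (2 * D.K) + D.C ≤ A) (hCA : D.C ≤ A) {u' : VT} (w : T.Walk u u')
    (hw : ∀ v ∈ w.support, v ∈ D.U) (h : Tracked D A n γ u) :
    Tracked D A (n + w.length) γ u' := by
  induction w generalizing n with
  | nil => simpa using h
  | cons hab w ih =>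
    have h1 := h.step hS hT hadj hA hCA (hw _ (by simp)) (hw _ (by simp)) hab
    have h2 := ih (fun v hv => hw v (by simp [hv])) h1
    rwa [SimpleGraph.Walk.length_cons, ← add_assoc, add_right_comm]

/-- Every word of length `m` is tracked for at most `L * m` steps. -/
theorem Tracked.word (hS : Subgroup.closure S = ⊤) (hT : T.IsAcyclic)
    (hadj : ∀ (g : G) (a b : VT), T.Adj a b → T.Adj (g • a) (g • b))
    (hA : D.C * (2 * D.K) + D.C ≤ A) (hCA : D.C ≤ A) (hA1 : 1 ≤ A) (hxU : x ∈ D.U) {L : ℕ}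
    (p : ∀ s : G, T.Walk x (s • x))
    (hp : ∀ s : G, s ∈ S ∨ s⁻¹ ∈ S → (p s).length + 1 ≤ L ∧ ∀ v ∈ (p s).support, v ∈ D.U)
    (l : List G) (hl : ∀ s ∈ l, s ∈ S ∨ s⁻¹ ∈ S) (h : Tracked D A n γ x) :
    ∃ m ≤ L * l.length, Tracked D A (n + m) (γ * l.prod) x := by
  induction l generalizing n γ with
  | nil => exact ⟨0, by simp, by simpa using h⟩
  | cons s l ih =>
    have hs := hl s List.mem_cons_self
    obtain ⟨h1, h2⟩ := hp s hs
    have h3 := h.walk hS hT hadj hA hCA (p s) h2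
    have h4 := h3.next_letter hS hA1 hs (h2 _ (SimpleGraph.Walk.end_mem_support _)) hxU
    obtain ⟨m, hm, h5⟩ := ih (fun t ht => hl t (List.mem_cons_of_mem _ ht)) h4
    refine ⟨(p s).length + 1 + m, ?_, ?_⟩
    · rw [List.length_cons, mul_add, mul_one]; omega
    · rw [List.prod_cons, ← mul_assoc]
      convert h5 using 1
      omega

/-- The data needed for tracking exist over every finite set of vertices, by
undistortion of the edge groups: matching two of finitely many edges at `x` is done by an
element of an edge group times one of finitely many elements. -/
theorem exists_trackData (hS : Subgroup.closure S = ⊤)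
    (hedge : ∀ a b : VT, T.Adj a b → FGUndistorted S (edgeStab G a b)) {U : Set VT}
    (hU : U.Finite) : ∃ D : TrackData S T x, D.U = U := by
  classical
  have hc : ∀ u : VT, ∃ c : G, (∃ g : G, g • u = x) → c • u = x := by
    intro u
    by_cases h : ∃ g : G, g • u = x
    · exact ⟨h.choose, fun _ => h.choose_spec⟩
    · exact ⟨1, fun h' => absurd h' h⟩
  choose c hc using hc
  obtain ⟨K, hK⟩ := (hU.image fun u => wordLength S (c u)).bddAbove
  -- A finite set containing the far endpoint of every edge inside `U` moved by `c` to start at `x`.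
  set E : Set VT := (fun q : VT × VT => c q.1 • q.2) '' (U ×ˢ U) with hE
  have hEf : E.Finite := (hU.prod hU).image _
  have hmE : ∀ u ∈ U, ∀ v ∈ U, c u • v ∈ E := fun u hu v hv => ⟨(u, v), ⟨hu, hv⟩, rfl⟩
  have ht : ∀ b₁ b₂ : VT, ∃ t ∈ MulAction.stabilizer G x,
      (∃ h ∈ MulAction.stabilizer G x, h • b₂ = b₁) → t • b₂ = b₁ := by
    intro b₁ b₂
    by_cases h : ∃ h ∈ MulAction.stabilizer G x, h • b₂ = b₁
    · exact ⟨h.choose, h.choose_spec.1, fun _ => h.choose_spec.2⟩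
    · exact ⟨1, one_mem _, fun h' => absurd h' h⟩
  choose t htx ht using ht
  obtain ⟨M, hM⟩ := ((hEf.prod hEf).image fun q => wordLength S (t q.1 q.2)).bddAbove
  have hRC : ∀ b : VT, ∃ R C : ℕ, T.Adj x b → ∀ g ∈ edgeStab G x b,
      ChainCost S (edgeStab G x b) R (C * wordLength S g + C) g := by
    intro b
    by_cases h : T.Adj x b
    · obtain ⟨R, C, h'⟩ := (hedge x b h).exists_chainCost
      exact ⟨R, C, fun _ => h'⟩
    · exact ⟨0, 0, fun h' => absurd h' h⟩
  choose R C hRC using hRC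
  obtain ⟨R₀, hR₀⟩ := (hEf.image R).bddAbove
  obtain ⟨C₀, hC₀⟩ := (hEf.image C).bddAbove
  refine ⟨⟨U, c, K, max (2 * K + 1) (max R₀ M), C₀ * (M + 1) + C₀ + 1,
    fun g u h => hc u ⟨g, h⟩, fun u hu => hK ⟨u, hu, rfl⟩, ?_, le_max_left _ _⟩, rfl⟩
  intro u₁ hu₁ v₁ hv₁ u₂ hu₂ v₂ hv₂ hadj h hh heq
  have hb₁ := hmE u₁ hu₁ v₁ hv₁
  have hb₂ := hmE u₂ hu₂ v₂ hv₂
  generalize c u₁ • v₁ = b₁ at *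
  generalize c u₂ • v₂ = b₂ at *
  have htb := ht b₁ b₂ ⟨h, hh, heq⟩
  have htl : wordLength S (t b₁ b₂) ≤ M := hM ⟨(b₁, b₂), ⟨hb₁, hb₂⟩, rfl⟩
  have hf : h * (t b₁ b₂)⁻¹ ∈ edgeStab G x b₁ := by
    refine Subgroup.mem_inf.2 ⟨mul_mem hh (inv_mem (htx _ _)), ?_⟩
    rw [MulAction.mem_stabilizer_iff, mul_smul]
    nth_rw 2 [← htb]
    rw [inv_smul_smul, heq]
  have hfc := hRC b₁ hadj _ hf
  have hfl : wordLength S (h * (t b₁ b₂)⁻¹) ≤ wordLength S h + M := by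
    have h1 := wordLength_mul_le hS h (t b₁ b₂)⁻¹
    have h2 := wordLength_inv_le hS (t b₁ b₂)
    omega
  have hR1 : R b₁ ≤ R₀ := hR₀ ⟨b₁, hb₁, rfl⟩
  have hC1 : C b₁ ≤ C₀ := hC₀ ⟨b₁, hb₁, rfl⟩
  have h3 : C b₁ * wordLength S (h * (t b₁ b₂)⁻¹) ≤ C₀ * (wordLength S h + M) :=
    Nat.mul_le_mul hC1 hfl
  have h4 := (hfc.mono (hR1.trans ((le_max_left _ _).trans (le_max_right (2 * K + 1) _)))
    le_rfl (inf_le_left : edgeStab G x b₁ ≤ MulAction.stabilizer G x)).mul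
    (ChainCost.single (htx b₁ b₂) (htl.trans ((le_max_right R₀ M).trans (le_max_right _ _))))
  rw [inv_mul_cancel_right] at h4
  refine h4.mono le_rfl ?_ le_rfl
  nlinarith [Nat.zero_le (C₀ * M * wordLength S h), Nat.zero_le (C₀ * wordLength S h),
    Nat.zero_le (wordLength S h)]

end Tracking

/-- **Corollary 3.6** (Statement 10).  If all edge stabilisers are finitely generated and
undistorted in `G`, then all vertex stabilisers are finitely generated and undistorted
in `G`. -/
theorem all_vertex_groups_undistorted
    {G VT : Type*} [Group G] [MulAction G VT]
    (S : Finset G) (hSgen : Subgroup.closure (S : Set G) = ⊤)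
    (T : SimpleGraph VT) (hact : ActsOnTree G T)
    (hedge : ∀ a b : VT, T.Adj a b → FGUndistorted (S : Set G) (edgeStab G a b)) :
    ∀ x : VT, FGUndistorted (S : Set G) (MulAction.stabilizer G x) := by
  intro x
  obtain ⟨hT, hadj, -, -, -⟩ := hact
  have hfin : (S : Set G).Finite := S.finite_toSet
  have p : ∀ s : G, T.Walk x (s • x) := fun s => (hT.connected x (s • x)).some
  have hgenfin : {s : G | s ∈ (S : Set G) ∨ s⁻¹ ∈ (S : Set G)}.Finite := hfin.union hfin.inv
  -- All vertices met by the walks from `x` to `s • x`, where `s` is a letter.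
  have hU : ({x} ∪ ⋃ s ∈ {s : G | s ∈ (S : Set G) ∨ s⁻¹ ∈ (S : Set G)},
      {v | v ∈ (p s).support}).Finite :=
    (finite_singleton x).union (hgenfin.biUnion fun s _ => (p s).support.finite_toSet)
  obtain ⟨D, hD⟩ := exists_trackData (x := x) hSgen hedge hU
  have hxU : x ∈ D.U := by rw [hD]; exact Or.inl rfl
  obtain ⟨L, hL⟩ := (hgenfin.image fun s => (p s).length + 1).bddAbove
  have hp : ∀ s : G, s ∈ (S : Set G) ∨ s⁻¹ ∈ (S : Set G) →
      (p s).length + 1 ≤ L ∧ ∀ v ∈ (p s).support, v ∈ D.U := by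
    refine fun s hs => ⟨hL ⟨s, hs, rfl⟩, fun v hv => ?_⟩
    rw [hD]
    exact Or.inr (mem_biUnion (x := s) hs hv)
  set A := D.C * (2 * D.K) + D.C + 1 with hA
  have hcx : D.c x ∈ MulAction.stabilizer G x := D.c_smul 1 x (one_smul _ _)
  have hR := D.le_R
  have hcl := D.c_le x hxU
  have hci := wordLength_inv_le hSgen (D.c x)
  have h0 : Tracked D A 1 1 x := by
    refine Or.inl ⟨one_smul _ _, ?_⟩
    rw [one_mul, mul_one]
    exact (ChainCost.single (inv_mem hcx) (by omega)).mono le_rfl (by omega) le_rfl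
  refine fgUndistorted_of_chainCost hfin hSgen (R := D.R) (C := A * L + A + 1) fun g hg => ?_
  obtain ⟨l, hl, hlS, hlg⟩ := exists_list_wordLength hSgen g
  obtain ⟨m, hm, htr⟩ := h0.word hSgen hT.isAcyclic hadj (by omega) (by omega) (by omega) hxU
    p hp l hlS
  rw [one_mul, hlg] at htr
  rw [hl] at hm
  rcases htr with ⟨-, hc⟩ | ⟨j, k, -, g', -, u₁, -, v₁, -, -, hbr, -⟩
  · have h1 := hc.mul (ChainCost.single hcx (by omega))
    rw [inv_mul_cancel_right] at h1
    refine h1.mono le_rfl ?_ le_rfl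
    have : A * m ≤ A * (L * wordLength (S : Set G) g) := Nat.mul_le_mul_left _ hm
    nlinarith [Nat.zero_le (A * wordLength (S : Set G) g), Nat.zero_le (A * L)]
  · exact absurd (MulAction.mem_stabilizer_iff.1 hg) hbr.ne

end MorseGoG
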